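/- (Proposition 3.2.) If a preperiodic sequence q on the network N is fragmentarily asymptotically stable, then q is fragmentarily asymptotically stable of finite type: for every δ > 0 there exists k₀ ∈ ℕ such that μ(D_δ^(k)(q)) = 0 for all k > k₀. -/

import Mathlib

open MeasureTheory Filter Topology Metric Set

noncomputable section

/-- The shift operator `Σ` on sequences: `(Σ q) k = q (k+1)`. -/
def shiftSeq {A : Type*} (q : ℕ → A) : ℕ → A := fun k => q (k + 1)

/-- A sequence is preperiodic if there exist `K ≥ 1` and `K₀ ≥ 0` with
`q (k + K) = q k` for all `k > K₀`. -/
def PreperiodicSeq {A : Type*} (q : ℕ → A) : Prop :=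
  ∃ K : ℕ, 1 ≤ K ∧ ∃ K₀ : ℕ, ∀ k > K₀, q (k + K) = q k

/-- Euclidean space `ℝ^d`. -/
abbrev Es (d : ℕ) := EuclideanSpace ℝ (Fin d)

/-- The heteroclinic network as a subset of phase space:
`N = (⋃ p, {ξ p}) ∪ (⋃ j, γ j)`. -/
def netSet {d P Q : ℕ} (ξ : Fin P → Es d) (γ : Fin Q → Set (Es d)) : Set (Es d) :=
  (⋃ p, {ξ p}) ∪ ⋃ j, γ j

/-- `x` follows the sequence `q` within `UN`: there are times
`0 ≤ t 0 < t' 0 < t 1 < t' 1 < ⋯` such that the trajectory of `x` stays in `UN`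
after time `t 0`, visits the neighborhoods `U (a (q k))` and `V (q k)` at times
`t k` and `t' k`, and between `t' k` and `t' (k+1)` avoids all neighborhoods
`U p` with `p ≠ b (q k)`. -/
def FollowsSeq {d P Q : ℕ} (φ : ℝ → Es d → Es d)
    (U : Fin P → Set (Es d)) (V : Fin Q → Set (Es d))
    (a b : Fin Q → Fin P) (UN : Set (Es d)) (q : ℕ → Fin Q) (x : Es d) : Prop :=
  ∃ t t' : ℕ → ℝ,
    0 ≤ t 0 ∧ (∀ k, t k < t' k) ∧ (∀ k, t' k < t (k + 1)) ∧
    (∀ s, t 0 < s → φ s x ∈ UN) ∧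
    (∀ k, φ (t k) x ∈ U (a (q k))) ∧
    (∀ k, φ (t' k) x ∈ V (q k)) ∧
    (∀ k, ∀ s, t' k < s → s < t' (k + 1) → ∀ p, p ≠ b (q k) → φ s x ∉ U p)

/-- The `δ`-stable set `S_δ(q)` of a sequence `q`. -/
def stableSet {d P Q : ℕ} (φ : ℝ → Es d → Es d) (ξ : Fin P → Es d) (γ : Fin Q → Set (Es d))
    (U : Fin P → Set (Es d)) (V : Fin Q → Set (Es d)) (a b : Fin Q → Fin P)
    (δ : ℝ) (q : ℕ → Fin Q) : Set (Es d) :=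
  {x ∈ thickening δ (netSet ξ γ) |
    FollowsSeq φ U V a b (thickening δ (netSet ξ γ)) q x}

/-- The set `A_δ(q)` of points attracted to `N` along `q`. -/
def attrSet {d P Q : ℕ} (φ : ℝ → Es d → Es d) (ξ : Fin P → Es d) (γ : Fin Q → Set (Es d))
    (U : Fin P → Set (Es d)) (V : Fin Q → Set (Es d)) (a b : Fin Q → Fin P)
    (δ : ℝ) (q : ℕ → Fin Q) : Set (Es d) :=
  {x ∈ stableSet φ ξ γ U V a b δ q |
    Tendsto (fun t => infDist (φ t x) (netSet ξ γ)) atTop (𝓝 0)}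

/-- The asymptotic `δ`-basin of attraction `B_δ(q) = ⋃ k, A_δ(Σ^k q)`. -/
def basin {d P Q : ℕ} (φ : ℝ → Es d → Es d) (ξ : Fin P → Es d) (γ : Fin Q → Set (Es d))
    (U : Fin P → Set (Es d)) (V : Fin Q → Set (Es d)) (a b : Fin Q → Fin P)
    (δ : ℝ) (q : ℕ → Fin Q) : Set (Es d) :=
  ⋃ k : ℕ, attrSet φ ξ γ U V a b δ (shiftSeq^[k] q)

/-- The difference set `D_δ^(k)(q) = A_δ(Σ^k q) \ A_δ(Σ^(k-1) q)` (for `k ≥ 1`). -/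
def Dset {d P Q : ℕ} (φ : ℝ → Es d → Es d) (ξ : Fin P → Es d) (γ : Fin Q → Set (Es d))
    (U : Fin P → Set (Es d)) (V : Fin Q → Set (Es d)) (a b : Fin Q → Fin P)
    (δ : ℝ) (q : ℕ → Fin Q) (k : ℕ) : Set (Es d) :=
  attrSet φ ξ γ U V a b δ (shiftSeq^[k] q) \
    attrSet φ ξ γ U V a b δ (shiftSeq^[k - 1] q)

/-- Fragmentary asymptotic stability of a sequence: `μ(B_δ(q)) > 0` for every `δ > 0`. -/
def FAS {d P Q : ℕ} (φ : ℝ → Es d → Es d) (ξ : Fin P → Es d) (γ : Fin Q → Set (Es d))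
    (U : Fin P → Set (Es d)) (V : Fin Q → Set (Es d)) (a b : Fin Q → Fin P)
    (q : ℕ → Fin Q) : Prop :=
  ∀ δ : ℝ, 0 < δ → 0 < volume (basin φ ξ γ U V a b δ q)

theorem shiftSeq_iterate_apply {A : Type*} (q : ℕ → A) (n k : ℕ) :
    shiftSeq^[n] q k = q (k + n) := by
  induction n generalizing k with
  | zero => rfl
  | succ n ih =>
    rw [Function.iterate_succ_apply']
    change shiftSeq^[n] q (k + 1) = _
    rw [ih, Nat.add_right_comm, Nat.add_assoc]

section Monotonicity

variable {d P Q : ℕ} {φ : ℝ → Es d → Es d} {ξ : Fin P → Es d} {γ : Fin Q → Set (Es d)}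
  {U : Fin P → Set (Es d)} {V : Fin Q → Set (Es d)} {a b : Fin Q → Fin P}

theorem FollowsSeq.shiftSeq {UN : Set (Es d)} {q : ℕ → Fin Q} {x : Es d}
    (h : FollowsSeq φ U V a b UN q x) : FollowsSeq φ U V a b UN (shiftSeq q) x := by
  obtain ⟨t, t', h0, htt', ht't, hUN, hU, hV, havoid⟩ := h
  have h01 : t 0 < t 1 := (htt' 0).trans (ht't 0)
  exact ⟨fun k => t (k + 1), fun k => t' (k + 1), h0.trans h01.le, fun k => htt' (k + 1),
    fun k => ht't (k + 1), fun s hs => hUN s (h01.trans hs), fun k => hU (k + 1),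
    fun k => hV (k + 1), fun k => havoid (k + 1)⟩

theorem attrSet_subset_attrSet_shiftSeq (δ : ℝ) (q : ℕ → Fin Q) :
    attrSet φ ξ γ U V a b δ q ⊆ attrSet φ ξ γ U V a b δ (shiftSeq q) :=
  fun _ hx => ⟨⟨hx.1.1, hx.1.2.shiftSeq⟩, hx.2⟩

theorem monotone_attrSet_shiftSeq_iterate (δ : ℝ) (q : ℕ → Fin Q) :
    Monotone fun n => attrSet φ ξ γ U V a b δ (shiftSeq^[n] q) :=
  monotone_nat_of_le_succ fun n => by
    simpa only [Function.iterate_succ_apply'] using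
      attrSet_subset_attrSet_shiftSeq δ (shiftSeq^[n] q)

end Monotonicity

/-- Proposition 3.2: a preperiodic f.a.s. sequence is f.a.s. of finite type. -/
theorem ffas_of_preperiodic_fas
    {d P Q : ℕ} (hd : 1 ≤ d) (hP : 1 ≤ P) (hQ : 1 ≤ Q)
    (φ : ℝ → Es d → Es d)
    (hφcont : Continuous fun pr : ℝ × Es d => φ pr.1 pr.2)
    (hφ0 : ∀ x, φ 0 x = x)
    (hφadd : ∀ s t x, φ (s + t) x = φ s (φ t x))
    (ξ : Fin P → Es d) (hξinj : Function.Injective ξ)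
    (hfix : ∀ t p, φ t (ξ p) = ξ p)
    (γ : Fin Q → Set (Es d)) (hγne : ∀ j, (γ j).Nonempty)
    (hγinv : ∀ j t x, x ∈ γ j → φ t x ∈ γ j)
    (a b : Fin Q → Fin P)
    (hω : ∀ j, ∀ x ∈ γ j, Tendsto (fun t => φ t x) atTop (𝓝 (ξ (b j))))
    (hα : ∀ j, ∀ x ∈ γ j, Tendsto (fun t => φ t x) atBot (𝓝 (ξ (a j))))
    (ζ : Fin Q → Es d) (hζ : ∀ j, ζ j ∈ γ j)
    (U : Fin P → Set (Es d)) (hUopen : ∀ p, IsOpen (U p)) (hUmem : ∀ p, ξ p ∈ U p)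
    (V : Fin Q → Set (Es d)) (hVopen : ∀ j, IsOpen (V j)) (hVmem : ∀ j, ζ j ∈ V j)
    (hUU : ∀ p p', p ≠ p' → Disjoint (closure (U p)) (closure (U p')))
    (hVV : ∀ j j', j ≠ j' → Disjoint (closure (V j)) (closure (V j')))
    (hUV : ∀ p j, Disjoint (closure (U p)) (closure (V j)))
    (q : ℕ → Fin Q) (hq : ∀ k, b (q k) = a (q (k + 1)))
    (hpre : PreperiodicSeq q) (hfas : FAS φ ξ γ U V a b q) :
    ∀ δ : ℝ, 0 < δ → ∃ k₀ : ℕ, ∀ k : ℕ, k₀ < k →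
      volume (Dset φ ξ γ U V a b δ q k) = 0 := by
  obtain ⟨K, hK, K₀, hper⟩ := hpre
  intro δ _
  refine ⟨K₀ + 1, fun k hk => ?_⟩
  have hshift : shiftSeq^[k - 1 + K] q = shiftSeq^[k - 1] q := by
    funext n
    rw [shiftSeq_iterate_apply, shiftSeq_iterate_apply, ← Nat.add_assoc]
    exact hper _ (by omega)
  have hsub : attrSet φ ξ γ U V a b δ (shiftSeq^[k] q) ⊆
      attrSet φ ξ γ U V a b δ (shiftSeq^[k - 1] q) := by
    rw [← hshift]
    exact monotone_attrSet_shiftSeq_iterate δ q (by omega)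
  rw [Dset, sdiff_eq_empty.mpr hsub, measure_empty]
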